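/- arXiv:2203.09659 — 2 statements merged into one kernel-verified Lean document; each statement's English description precedes it below -/
import Mathlib

section
/- Fix n ∈ ℕ, d ∈ {1,…,n} and let k = Σ_{j=0}^{d} C(n,j). Let Q > k and let X₁,…,X_Q be independent uniform random points of {−1,1}^n. Then the probability that the linear evaluation map Φ, sending a function f : {−1,1}^n → ℝ of degree at most d to (f(X₁),…,f(X_Q)) ∈ ℝ^Q, fails to be injective on the space of degree-at-most-d functions is at most (2Q)^{k−1}·(1 − 2^{−d})^{Q}. -/
/-!
Functions of degree at most `d` are identified with coefficient vectors `c ∈ ℝᵏ`, so that evaluation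
at `x` becomes the dot product of `c` with the vector `walshVec n d x` of low-degree Walsh functions
(`eq_dotProduct_of_degLE`).

If the evaluation map at `X₁, …, X_Q` is not injective, the vectors of the `X_j` span a proper
subspace of `ℝᵏ`, hence some `k - 1` of them already span it (`exists_small_determining`). For every
set `J` of `k - 1` indices and every choice of the points `X_i`, `i ∈ J`, fix a nonzero `c` that
vanishes at these points (`exists_annihilator`). If `J` indexes a spanning subfamily, this `c`, which
depends on `X_i`, `i ∈ J`, only, vanishes at all the remaining points too.

A nonzero function of degree at most `d` vanishes at a fraction of at most `p = 1 - 2⁻ᵈ` of the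
hypercube (`card_zeros_le`): restricted to any subcube whose free coordinates form a maximal set of
the Fourier support, it is not identically zero. So each `J` contributes at most `p ^ (Q - (k - 1))`
to the probability (`card_tuples_le`), and a union bound over the at most `Q ^ (k - 1)` sets `J`,
together with `p ≥ 1/2`, gives the claim.
-/

open Finset

namespace EIS

/-- Walsh function `w_S(x) = ∏_{i ∈ S} x_i`, with points of the hypercube encoded by
`Fin n → Bool` (`true ↦ 1`, `false ↦ -1`). -/
noncomputable def walsh {n : ℕ} (S : Finset (Fin n)) (x : Fin n → Bool) : ℝ :=
  ∏ i ∈ S, (if x i then (1 : ℝ) else -1)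

/-- Fourier–Walsh coefficient `f̂(S) = E_x f(x) w_S(x)`. -/
noncomputable def fourierCoeff {n : ℕ} (f : (Fin n → Bool) → ℝ) (S : Finset (Fin n)) : ℝ :=
  (∑ x : Fin n → Bool, f x * walsh S x) / 2 ^ n

/-- `f` has degree at most `d`: all Fourier coefficients above level `d` vanish. -/
def DegLE (n d : ℕ) (f : (Fin n → Bool) → ℝ) : Prop :=
  ∀ S : Finset (Fin n), d < S.card → fourierCoeff f S = 0

/-- Squared L₂ distance `‖f - g‖²_{L₂} = E_x (f(x) - g(x))²` w.r.t. the uniform measure. -/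
noncomputable def dist2 {n : ℕ} (f g : (Fin n → Bool) → ℝ) : ℝ :=
  (∑ x : Fin n → Bool, (f x - g x) ^ 2) / 2 ^ n

/-- `f` takes values in `[-1, 1]`. -/
def Bounded1 {n : ℕ} (f : (Fin n → Bool) → ℝ) : Prop := ∀ x, |f x| ≤ 1

/-- `f` is Boolean, i.e. takes values in `{-1, 1}`. -/
def BoolValued {n : ℕ} (f : (Fin n → Bool) → ℝ) : Prop := ∀ x, f x = 1 ∨ f x = -1

/-- The class `F_{n,d}` of `[-1,1]`-valued functions of degree at most `d`. -/
def Fclass (n d : ℕ) : Set ((Fin n → Bool) → ℝ) := {f | Bounded1 f ∧ DegLE n d f}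

/-- The class `B_{n,d}` of Boolean functions of degree at most `d`. -/
def Bclass (n d : ℕ) : Set ((Fin n → Bool) → ℝ) := {f | BoolValued f ∧ DegLE n d f}

/-- The Fourier tail `Σ_{|S| > d} f̂(S)²`. -/
noncomputable def fourierTail (n d : ℕ) (f : (Fin n → Bool) → ℝ) : ℝ :=
  ∑ S ∈ Finset.univ.filter (fun S : Finset (Fin n) => d < S.card), fourierCoeff f S ^ 2

/-- A deterministic adaptive learning algorithm: `query` maps the history of
(queried point, observed value) pairs to the next query point (in particular `query []` is the
fixed first query point), and `output` maps the final history to the hypothesis function. -/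
structure DetAlgo (n : ℕ) where
  query : List ((Fin n → Bool) × ℝ) → (Fin n → Bool)
  output : List ((Fin n → Bool) × ℝ) → ((Fin n → Bool) → ℝ)

/-- The history of the run of a deterministic adaptive algorithm `A` on the unknown function `f`
after `q` queries. -/
def runHist {n : ℕ} (A : DetAlgo n) (f : (Fin n → Bool) → ℝ) : ℕ → List ((Fin n → Bool) × ℝ)
  | 0 => []
  | q + 1 =>
      let h := runHist A f q
      h ++ [(A.query h, f (A.query h))]

/-- `A` learns the class `F` with `Q` queries and L₂-error `ε`:
for every `f ∈ F` the produced hypothesis `h` satisfies `‖h - f‖²_{L₂} ≤ ε`. -/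
def DetLearns {n : ℕ} (A : DetAlgo n) (Q : ℕ) (F : Set ((Fin n → Bool) → ℝ)) (ε : ℝ) : Prop :=
  ∀ f ∈ F, dist2 (A.output (runHist A f Q)) f ≤ ε

/-- The random-example algorithm `H` (a map from `Q` labeled examples to a hypothesis) learns the
class `F` with L₂-error `ε` and confidence `1 - δ`: for every `f ∈ F`, the fraction of
tuples `(X₁, …, X_Q)` of sample points (equivalently, the probability with respect to i.i.d.
uniform samples) for which `‖H((X₁, f(X₁)), …, (X_Q, f(X_Q))) - f‖²_{L₂} ≤ ε` is at
least `1 - δ`. -/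
def RandLearns {n : ℕ} (Q : ℕ)
    (H : (Fin Q → (Fin n → Bool) × ℝ) → ((Fin n → Bool) → ℝ))
    (F : Set ((Fin n → Bool) → ℝ)) (ε δ : ℝ) : Prop :=
  ∀ f ∈ F,
    (1 - δ) * ((2 : ℝ) ^ n) ^ Q ≤
      (Nat.card {X : Fin Q → Fin n → Bool //
        dist2 (H fun j => (X j, f (X j))) f ≤ ε} : ℝ)

/-- `g` depends only on the coordinates in `σ`. -/
def DependsOn {n : ℕ} (σ : Finset (Fin n)) (g : (Fin n → Bool) → ℝ) : Prop :=
  ∀ x y : Fin n → Bool, (∀ i ∈ σ, x i = y i) → g x = g y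

/-- `f` is a `(k, η)`-junta. -/
def Junta (n k : ℕ) (η : ℝ) (f : (Fin n → Bool) → ℝ) : Prop :=
  ∃ σ : Finset (Fin n), σ.card ≤ k ∧
    ∃ g : (Fin n → Bool) → ℝ, DependsOn σ g ∧ dist2 f g ≤ η

/-- The class `J_{n,k,η}` of `[-1,1]`-valued `(k, η)`-juntas. -/
def Jclass (n k : ℕ) (η : ℝ) : Set ((Fin n → Bool) → ℝ) := {f | Bounded1 f ∧ Junta n k η f}

end EIS

open EIS

namespace EIS

/-! ### Low-degree Walsh expansions -/

/-- The frequencies of degree at most `d`; there are `k` of them. -/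
abbrev LowFreq (n d : ℕ) : Type := {S : Finset (Fin n) // S.card ≤ d}

/-- The vector of low-degree Walsh functions evaluated at `x`. -/
noncomputable def walshVec (n d : ℕ) (x : Fin n → Bool) : LowFreq n d → ℝ :=
  fun S => walsh S.1 x

theorem card_lowFreq (n d : ℕ) :
    Fintype.card (LowFreq n d) = ∑ j ∈ Finset.range (d + 1), n.choose j := by
  rw [Fintype.card_subtype,
    Finset.card_eq_sum_card_fiberwise (f := Finset.card) (t := Finset.range (d + 1))]
  · refine Finset.sum_congr rfl fun j hj => ?_
    have : ((univ.filter fun S : Finset (Fin n) => S.card ≤ d).filter fun S => S.card = j)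
        = Finset.powersetCard j univ := by
      ext S
      simp only [mem_filter, mem_univ, true_and, mem_powersetCard, subset_univ]
      have := Finset.mem_range.1 hj
      omega
    rw [this, Finset.card_powersetCard, Finset.card_univ, Fintype.card_fin]
  · intro S hS
    simp only [coe_filter, mem_univ, true_and, Set.mem_ofPred_eq] at hS
    simp only [coe_range, Set.mem_Iio]
    omega

/-- Completeness of the Walsh system, from `∑_S w_S(x) w_S(y) = ∏_i (1 + x_i y_i)`. -/
theorem sum_walsh_mul_walsh {n : ℕ} (x y : Fin n → Bool) :
    ∑ S : Finset (Fin n), walsh S x * walsh S y = if x = y then (2 : ℝ) ^ n else 0 := by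
  have h : ∑ S : Finset (Fin n), walsh S x * walsh S y =
      ∏ i : Fin n, (1 + (if x i then (1 : ℝ) else -1) * (if y i then (1 : ℝ) else -1)) := by
    rw [Finset.prod_one_add, Finset.powerset_univ]
    simp only [walsh, Finset.prod_mul_distrib]
  rw [h]
  split_ifs with hxy
  · subst hxy
    rw [Finset.prod_congr rfl (g := fun _ => (2 : ℝ))]
    · simp
    · intro i _
      cases x i <;> norm_num
  · obtain ⟨i, hi⟩ := Function.ne_iff.1 hxy
    refine Finset.prod_eq_zero (Finset.mem_univ i) ?_
    cases hx : x i <;> cases hy : y i <;> simp_all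

theorem walsh_inversion {n : ℕ} (f : (Fin n → Bool) → ℝ) (y : Fin n → Bool) :
    f y = ∑ S : Finset (Fin n), fourierCoeff f S * walsh S y := by
  have h : ∑ S : Finset (Fin n), fourierCoeff f S * walsh S y =
      (∑ x, f x * ∑ S : Finset (Fin n), walsh S x * walsh S y) / 2 ^ n := by
    simp only [fourierCoeff, Finset.mul_sum, Finset.sum_div, Finset.sum_mul]
    rw [Finset.sum_comm]
    refine Finset.sum_congr rfl fun x _ => Finset.sum_congr rfl fun S _ => ?_
    ring
  rw [h]
  simp [sum_walsh_mul_walsh]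

theorem eq_dotProduct_of_degLE {n d : ℕ} {f : (Fin n → Bool) → ℝ} (hf : DegLE n d f)
    (y : Fin n → Bool) :
    f y = (fun S : LowFreq n d => fourierCoeff f S.1) ⬝ᵥ walshVec n d y := by
  have hsub := Finset.sum_subtype (F := inferInstanceAs (Fintype (LowFreq n d)))
    (univ.filter fun S : Finset (Fin n) => S.card ≤ d) (p := fun S => S.card ≤ d) (by simp) (fun S => fourierCoeff f S * walsh S y)
  refine (walsh_inversion f y).trans (Eq.trans ?_ hsub)
  symm
  refine Finset.sum_subset (Finset.subset_univ _) fun S _ hS => ?_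
  rw [hf S (by simpa using hS), zero_mul]

/-! ### Zeros of low-degree functions -/

/-- On a subcube with free coordinates `S`, the functions `w_S` and `w_T` are orthogonal unless
`S ⊆ T`. -/
theorem sum_subcube_walsh_eq_zero {n : ℕ} (S T : Finset (Fin n)) (y : Fin n → Bool)
    (h : ¬ S ⊆ T) :
    ∑ x ∈ Fintype.piFinset (fun i => if i ∈ S then univ else {y i}),
      walsh T x * walsh S x = 0 := by
  obtain ⟨i, hiS, hiT⟩ := Finset.not_subset.1 h
  have key := Finset.prod_univ_sum (fun i => if i ∈ S then (univ : Finset Bool) else {y i})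
    (fun i b => (if i ∈ T then (if b then (1 : ℝ) else -1) else 1) *
      (if i ∈ S then (if b then (1 : ℝ) else -1) else 1))
  rw [Finset.prod_eq_zero (Finset.mem_univ i) (by simp [hiS, hiT])] at key
  rw [key]
  refine Finset.sum_congr rfl fun x _ => ?_
  rw [Finset.prod_mul_distrib]
  simp [walsh]

theorem walsh_mul_self {n : ℕ} (S : Finset (Fin n)) (x : Fin n → Bool) :
    walsh S x * walsh S x = 1 := by
  rw [walsh, ← Finset.prod_mul_distrib]
  refine Finset.prod_eq_one fun i _ => ?_
  split_ifs <;> norm_num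

/-- If `S` is maximal in the Fourier support, then every subcube with free coordinates `S`
contains a point where the function does not vanish: the correlation with `w_S` over the subcube
only sees the coefficient of `w_S`. -/
theorem exists_ne_zero_on_subcube {n d : ℕ} (c : LowFreq n d → ℝ) (S : LowFreq n d)
    (hS : c S ≠ 0) (hmax : ∀ T, c T ≠ 0 → S.1 ⊆ T.1 → T = S) (y : Fin n → Bool) :
    ∃ x, (∀ i ∉ S.1, x i = y i) ∧ c ⬝ᵥ walshVec n d x ≠ 0 := by
  by_contra! hcon
  set A := Fintype.piFinset (fun i => if i ∈ S.1 then (univ : Finset Bool) else {y i}) with hA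
  have h0 : ∑ x ∈ A, (c ⬝ᵥ walshVec n d x) * walsh S.1 x = 0 := by
    refine Finset.sum_eq_zero fun x hx => ?_
    rw [hcon x, zero_mul]
    intro i hi
    have := Fintype.mem_piFinset.1 hx i
    simpa [hi] using this
  have h1 : ∑ x ∈ A, (c ⬝ᵥ walshVec n d x) * walsh S.1 x = c S * A.card := by
    simp only [dotProduct, walshVec, Finset.sum_mul]
    rw [Finset.sum_comm, Finset.sum_eq_single S]
    · simp only [mul_assoc, walsh_mul_self, mul_one]
      rw [Finset.sum_const, nsmul_eq_mul, mul_comm]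
    · intro T _ hT
      by_cases hc : c T = 0
      · simp [hc]
      · have hz := sum_subcube_walsh_eq_zero S.1 T.1 y fun h => hT (hmax T hc h)
        simp only [mul_assoc]
        rw [← Finset.mul_sum, hz, mul_zero]
    · simp
  have hyA : y ∈ A := by
    refine Fintype.mem_piFinset.2 fun i => ?_
    split_ifs <;> simp
  have : (A.card : ℝ) ≠ 0 := by exact_mod_cast Finset.card_ne_zero_of_mem hyA
  exact mul_ne_zero hS this (h1 ▸ h0)

/-- Schwartz–Zippel bound on the hypercube: a nonzero function of degree at most `d` is nonzero
on at least a `2⁻ᵈ` fraction of the points. -/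
theorem card_zeros_le {n d : ℕ} (hdn : d ≤ n) (c : LowFreq n d → ℝ) (hc : c ≠ 0) :
    ((univ.filter fun x : Fin n → Bool => c ⬝ᵥ walshVec n d x = 0).card : ℝ) ≤
      2 ^ n * (1 - (1 / 2) ^ d) := by
  classical
  obtain ⟨S₀, hS₀⟩ := Function.ne_iff.1 hc
  obtain ⟨S, hS, hSmax⟩ := Finset.exists_max_image
    (univ.filter fun S : LowFreq n d => c S ≠ 0) (fun S => S.1.card) ⟨S₀, by simpa using hS₀⟩
  have hmax : ∀ T, c T ≠ 0 → S.1 ⊆ T.1 → T = S := fun T hT hST =>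
    (Subtype.ext (Finset.eq_of_subset_of_card_le hST (hSmax T (by simpa using hT)))).symm
  have hS' : c S ≠ 0 := by simpa using hS
  set N := univ.filter fun x : Fin n → Bool => c ⬝ᵥ walshVec n d x ≠ 0 with hN
  -- restriction to the coordinates outside `S` is surjective on the non-vanishing points
  have hcard : 2 ^ (n - d) ≤ N.card := by
    have hsurj : (univ : Finset ({i // i ∉ S.1} → Bool)) ⊆ N.image fun x i => x i.1 := by
      intro u _
      obtain ⟨x, hx, hx0⟩ := exists_ne_zero_on_subcube c S hS' hmax
        (fun i => if h : i ∉ S.1 then u ⟨i, h⟩ else true)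
      refine Finset.mem_image.2 ⟨x, by simpa [hN] using hx0, ?_⟩
      funext i
      rw [hx i.1 i.2, dif_pos i.2]
    have h1 := (Finset.card_le_card hsurj).trans Finset.card_image_le
    have h2 : Fintype.card {i // i ∉ S.1} = n - S.1.card := by
      rw [Fintype.card_subtype_compl]
      simp
    rw [Finset.card_univ, Fintype.card_fun, Fintype.card_bool, h2] at h1
    exact (Nat.pow_le_pow_right (by norm_num) (by have := S.2; omega)).trans h1
  have hsum := Finset.card_filter_add_card_filter_not (s := (univ : Finset (Fin n → Bool)))
    (fun x => c ⬝ᵥ walshVec n d x = 0)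
  rw [Finset.card_univ, Fintype.card_fun, Fintype.card_bool, Fintype.card_fin] at hsum
  have hsumR : ((univ.filter fun x : Fin n → Bool => c ⬝ᵥ walshVec n d x = 0).card : ℝ) +
      N.card = 2 ^ n := by exact_mod_cast hsum
  have hcardR : (2 : ℝ) ^ (n - d) ≤ N.card := by exact_mod_cast hcard
  have hpow : (2 : ℝ) ^ n * (1 / 2) ^ d = 2 ^ (n - d) := by
    rw [one_div, inv_pow, pow_sub₀ _ (by norm_num) hdn]
  rw [mul_sub, hpow]
  linarith

/-! ### Linear algebra -/

/-- If some nonzero `c` annihilates a finite family of vectors, then fewer than `dim` of them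
already determine which functionals annihilate the family. -/
theorem exists_small_determining {ι κ : Type*} [Fintype ι] [Fintype κ] (v : ι → κ → ℝ)
    (c : κ → ℝ) (hc : c ≠ 0) (hcv : ∀ j, c ⬝ᵥ v j = 0) :
    ∃ I : Finset ι, I.card < Fintype.card κ ∧
      ∀ c' : κ → ℝ, (∀ i ∈ I, c' ⬝ᵥ v i = 0) → ∀ j, c' ⬝ᵥ v j = 0 := by
  classical
  obtain ⟨μ, a, ha, hspan, hli⟩ := exists_linearIndependent' ℝ v
  have : Finite μ := Finite.of_injective a ha
  have := Fintype.ofFinite μ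
  refine ⟨univ.image a, ?_, fun c' hc' j => ?_⟩
  · rw [Finset.card_image_of_injective _ ha, Finset.card_univ,
      ← finrank_span_eq_card hli, hspan, ← Module.finrank_fintype_fun_eq_card ℝ (η := κ)]
    refine Submodule.finrank_lt fun htop => hc ?_
    have hle : Submodule.span ℝ (Set.range v) ≤ LinearMap.ker (dotProductBilin ℝ ℝ c) := by
      rw [Submodule.span_le]
      rintro _ ⟨j, rfl⟩
      simpa using hcv j
    have hmem : c ∈ LinearMap.ker (dotProductBilin ℝ ℝ c) := hle (htop ▸ Submodule.mem_top)
    exact dotProduct_self_eq_zero.1 (by simpa using hmem)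
  · have hle : Submodule.span ℝ (Set.range (v ∘ a)) ≤
        LinearMap.ker (dotProductBilin ℝ ℝ c') := by
      rw [Submodule.span_le]
      rintro _ ⟨m, rfl⟩
      simpa using hc' (a m) (Finset.mem_image_of_mem a (Finset.mem_univ m))
    have := hle (hspan.symm ▸ Submodule.subset_span (Set.mem_range_self j))
    simpa using this

theorem exists_annihilator {ι κ : Type*} [Fintype ι] [Fintype κ] (v : ι → κ → ℝ)
    (h : Fintype.card ι < Fintype.card κ) :
    ∃ c : κ → ℝ, c ≠ 0 ∧ ∀ i, c ⬝ᵥ v i = 0 := by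
  classical
  have hker := LinearMap.ker_ne_bot_of_finrank_lt (f := Matrix.mulVecLin (Matrix.of v))
    (by simpa using h)
  obtain ⟨c, hc, hc0⟩ := Submodule.exists_mem_ne_zero_of_ne_bot hker
  refine ⟨c, hc0, fun i => ?_⟩
  have := congrFun (LinearMap.mem_ker.1 hc) i
  rw [dotProduct_comm]
  simpa [Matrix.mulVec] using this

/-! ### Counting tuples -/

/-- If the coordinates in `I` determine a set `Z` of density at most `p`, then the fraction of
tuples whose other coordinates all lie in `Z` is at most `p ^ (|ι| - |I|)`. -/
theorem card_tuples_le {ι α : Type*} [Fintype ι] [DecidableEq ι] [Fintype α] [DecidableEq α]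
    (I : Finset ι) (Z : ({i // i ∈ I} → α) → Finset α) (p : ℝ)
    (hZ : ∀ u, ((Z u).card : ℝ) ≤ Fintype.card α * p) :
    ((univ.filter fun X : ι → α => ∀ j ∉ I, X j ∈ Z fun i => X i).card : ℝ) ≤
      (Fintype.card α : ℝ) ^ Fintype.card ι * p ^ (Fintype.card ι - I.card) := by
  set A := univ.filter fun X : ι → α => ∀ j ∉ I, X j ∈ Z fun i => X i with hA
  have hinj : A.card ≤ ((univ : Finset ({i // i ∈ I} → α)).sigma
      fun u => Fintype.piFinset fun _ : {i // i ∉ I} => Z u).card := by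
    refine Finset.card_le_card_of_injOn (fun X => ⟨fun i => X i, fun i => X i⟩) ?_ ?_
    · intro X hX
      simp only [hA, coe_filter, mem_univ, true_and, Set.mem_ofPred_eq] at hX
      simp only [coe_sigma, Set.mem_sigma_iff, mem_coe, mem_univ, true_and,
        Fintype.mem_piFinset]
      exact fun i => hX i.1 i.2
    · intro X _ Y _ hXY
      simp only [Sigma.mk.injEq, heq_eq_eq] at hXY
      funext i
      by_cases hi : i ∈ I
      · exact congrFun hXY.1 ⟨i, hi⟩
      · exact congrFun hXY.2 ⟨i, hi⟩
  have hcompl : Fintype.card {i // i ∉ I} = Fintype.card ι - I.card := by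
    rw [Fintype.card_subtype_compl]
    simp
  have hI : I.card ≤ Fintype.card ι := Finset.card_le_univ I
  rw [Finset.card_sigma] at hinj
  calc (A.card : ℝ)
      ≤ ∑ u : {i // i ∈ I} → α, ((Z u).card : ℝ) ^ (Fintype.card ι - I.card) := by
        refine (Nat.cast_le.2 hinj).trans (le_of_eq ?_)
        push_cast
        refine Finset.sum_congr rfl fun u _ => ?_
        simp [hcompl]
    _ ≤ ∑ _u : {i // i ∈ I} → α, ((Fintype.card α : ℝ) * p) ^ (Fintype.card ι - I.card) :=
        Finset.sum_le_sum fun u _ => pow_le_pow_left₀ (Nat.cast_nonneg _) (hZ u) _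
    _ = _ := by
        rw [Finset.sum_const, nsmul_eq_mul, Finset.card_univ, Fintype.card_fun,
          Fintype.card_coe, Nat.cast_pow, mul_pow, ← mul_assoc, ← pow_add,
          Nat.add_sub_cancel' hI]

end EIS

/-- **Estimate in the proof of (1.18).** Let `k = Σ_{j=0}^d C(n,j)` and `Q > k`. For
`X₁, …, X_Q` independent uniform points of `{-1,1}ⁿ`, the probability that the evaluation map
`f ↦ (f(X₁), …, f(X_Q))` fails to be injective on the space of functions of degree at most `d`
is at most `(2Q)^{k-1}·(1 - 2^{-d})^Q`. -/
theorem stmt17 (n d Q : ℕ) (hd1 : 1 ≤ d) (hdn : d ≤ n)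
    (hQ : (∑ j ∈ Finset.range (d + 1), n.choose j) < Q) :
    (Nat.card {X : Fin Q → Fin n → Bool //
        ∃ f g : (Fin n → Bool) → ℝ, DegLE n d f ∧ DegLE n d g ∧ f ≠ g ∧
          ∀ j, f (X j) = g (X j)} : ℝ) / ((2 : ℝ) ^ n) ^ Q ≤
      (2 * (Q : ℝ)) ^ ((∑ j ∈ Finset.range (d + 1), n.choose j) - 1) *
        (1 - (2 : ℝ) ^ (-(d : ℝ))) ^ Q := by
  classical
  have hpd : (2 : ℝ) ^ (-(d : ℝ)) = (1 / 2) ^ d := by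
    rw [Real.rpow_neg (by norm_num), Real.rpow_natCast, one_div, inv_pow]
  rw [hpd]
  set k := ∑ j ∈ Finset.range (d + 1), n.choose j with hk
  set p : ℝ := 1 - (1 / 2) ^ d with hp
  have hcardK : Fintype.card (LowFreq n d) = k := card_lowFreq n d
  have hkpos : 0 < k := hcardK ▸ Fintype.card_pos_iff.2 ⟨⟨∅, by simp⟩⟩
  -- `d ≥ 1` makes `p ≥ 1/2`, so each missing factor `p` costs at most a factor `2`
  have hp2 : 1 ≤ 2 * p := by
    have : (1 / 2 : ℝ) ^ d ≤ (1 / 2) ^ 1 :=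
      pow_le_pow_of_le_one (by norm_num) (by norm_num) hd1
    rw [hp]
    linarith
  have hp0 : 0 ≤ p := by linarith
  -- Only sets of size `k - 1` matter; elsewhere any nonzero vector serves as a default.
  have hann : ∀ (I : Finset (Fin Q)) (u : {i // i ∈ I} → Fin n → Bool),
      ∃ c : LowFreq n d → ℝ, c ≠ 0 ∧
        (I.card = k - 1 → ∀ i, c ⬝ᵥ walshVec n d (u i) = 0) := by
    intro I u
    by_cases hI : I.card = k - 1
    · obtain ⟨c, hc, h⟩ := exists_annihilator (fun i => walshVec n d (u i))
        (by rw [Fintype.card_coe, hI, hcardK]; omega)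
      exact ⟨c, hc, fun _ => h⟩
    · exact ⟨fun _ => 1, fun h => by simpa using congrFun h ⟨∅, by simp⟩,
        fun h => absurd h hI⟩
  choose c hc0 hc using hann
  -- the tuples all of whose points outside `I` are zeros of the function chosen from `I`
  let B : Finset (Fin Q) → Finset (Fin Q → Fin n → Bool) := fun I =>
    univ.filter fun X => ∀ j ∉ I, X j ∈
      univ.filter fun x => c I (fun i => X i) ⬝ᵥ walshVec n d x = 0
  have hB : ∀ I ∈ powersetCard (k - 1) (univ : Finset (Fin Q)),
      ((B I).card : ℝ) ≤ ((2 : ℝ) ^ n) ^ Q * p ^ (Q - (k - 1)) := by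
    intro I hI
    have h := card_tuples_le I
      (fun u => univ.filter fun x : Fin n → Bool => c I u ⬝ᵥ walshVec n d x = 0) p
      (fun u => by
        refine (card_zeros_le hdn (c I u) (hc0 I u)).trans (le_of_eq ?_)
        simp [hp])
    rw [(mem_powersetCard.1 hI).2] at h
    simpa [B] using h
  have hcover : (univ.filter fun X : Fin Q → Fin n → Bool =>
      ∃ f g : (Fin n → Bool) → ℝ, DegLE n d f ∧ DegLE n d g ∧ f ≠ g ∧
        ∀ j, f (X j) = g (X j)) ⊆ (powersetCard (k - 1) univ).biUnion B := by
    intro X hX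
    obtain ⟨f, g, hf, hg, hfg, hX⟩ := (mem_filter.1 hX).2
    obtain ⟨I, hI, hdet⟩ := exists_small_determining (fun j => walshVec n d (X j))
      ((fun S : LowFreq n d => fourierCoeff f S.1) - fun S => fourierCoeff g S.1)
      (fun h => hfg (funext fun y => by
        rw [eq_dotProduct_of_degLE hf, eq_dotProduct_of_degLE hg, sub_eq_zero.1 h]))
      (fun j => by
        rw [sub_dotProduct, ← eq_dotProduct_of_degLE hf, ← eq_dotProduct_of_degLE hg, hX j,
          sub_self])
    obtain ⟨J, hIJ, hJ⟩ := Finset.exists_superset_card_eq (s := I) (n := k - 1)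
      (by omega) (by rw [Fintype.card_fin]; omega)
    refine mem_biUnion.2 ⟨J, mem_powersetCard.2 ⟨subset_univ _, hJ⟩, ?_⟩
    refine mem_filter.2 ⟨mem_univ _, fun j _ => mem_filter.2 ⟨mem_univ _, ?_⟩⟩
    exact hdet _ (fun i hi => hc J (fun i => X i) hJ ⟨i, hIJ hi⟩) j
  have hpow : p ^ (Q - (k - 1)) ≤ 2 ^ (k - 1) * p ^ Q := by
    have hsplit : p ^ Q = p ^ (k - 1) * p ^ (Q - (k - 1)) := by
      rw [← pow_add]
      congr 1
      omega
    rw [hsplit, ← mul_assoc, ← mul_pow]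
    exact le_mul_of_one_le_left (pow_nonneg hp0 _) (one_le_pow₀ hp2)
  rw [div_le_iff₀ (by positivity), Nat.card_eq_fintype_card, Fintype.card_subtype]
  calc _ ≤ (((powersetCard (k - 1) (univ : Finset (Fin Q))).biUnion B).card : ℝ) :=
        Nat.cast_le.2 (card_le_card hcover)
    _ ≤ ∑ I ∈ powersetCard (k - 1) (univ : Finset (Fin Q)), ((B I).card : ℝ) := by
        exact_mod_cast card_biUnion_le
    _ ≤ ∑ _I ∈ powersetCard (k - 1) (univ : Finset (Fin Q)),
          ((2 : ℝ) ^ n) ^ Q * p ^ (Q - (k - 1)) := sum_le_sum hB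
    _ = (Q.choose (k - 1) : ℝ) * (((2 : ℝ) ^ n) ^ Q * p ^ (Q - (k - 1))) := by
        rw [sum_const, card_powersetCard, card_univ, Fintype.card_fin, nsmul_eq_mul]
    _ ≤ (Q : ℝ) ^ (k - 1) * (((2 : ℝ) ^ n) ^ Q * (2 ^ (k - 1) * p ^ Q)) := by
        have hchoose : (Q.choose (k - 1) : ℝ) ≤ (Q : ℝ) ^ (k - 1) := by
          exact_mod_cast Nat.choose_le_pow Q (k - 1)
        gcongr
    _ = _ := by
        rw [mul_pow]
        ring
end

section
/- Let d ∈ ℕ, B ≥ 1, ε ∈ (0,1), and let f : {−1,1}^n → ℝ be a function of degree at most d whose Fourier coefficients satisfy the Bohnenblust–Hille-type bound ( Σ_{S ⊆ {1,…,n}} |f̂(S)|^{2d/(d+1)} )^{(d+1)/(2d)} ≤ B. Define S(f) = { S ⊆ {1,…,n} : |f̂(S)| ≥ ε^{(d+1)/2}·B^{−d} }. Then #S(f) ≤ B^{2d}/ε^{d} and Σ_{S ∉ S(f)} f̂(S)² ≤ ε. -/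
/-! Write `p = 2d/(d+1)` and `τ = ε^((d+1)/2) B^(-d)`; the hypothesis says that
`∑ |f̂(S)|^p ≤ B^p`. Markov's inequality bounds the number of coefficients of size at least `τ` by
`B^p / τ^p`, and the coefficients smaller than `τ` contribute at most
`τ^(2-p) ∑ |f̂(S)|^p ≤ τ^(2-p) B^p` to the sum of squares. The threshold is chosen so that
`τ^(2-p) B^p = ε`, and then `B^p / τ^p = B^(2d) / ε^d`. -/

open Finset

open EIS

/-- Markov's inequality for the `p`-th powers of a finite family. -/
theorem card_mul_rpow_le {ι : Type*} [Fintype ι] (a : ι → ℝ) {p τ M : ℝ} (hp : 0 ≤ p)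
    (hτ : 0 ≤ τ) (hM : ∑ i, |a i| ^ p ≤ M) :
    ((Finset.univ.filter (fun i => τ ≤ |a i|)).card : ℝ) * τ ^ p ≤ M := by
  rw [← nsmul_eq_mul]
  refine (Finset.card_nsmul_le_sum _ (fun i => |a i| ^ p) _ fun i hi => ?_).trans
    ((Finset.sum_le_sum_of_subset_of_nonneg (Finset.filter_subset _ _)
      fun i _ _ => Real.rpow_nonneg (abs_nonneg _) _).trans hM)
  exact Real.rpow_le_rpow hτ (Finset.mem_filter.mp hi).2 hp

/-- The entries below the threshold satisfy `a² = |a|^(2-p) |a|^p ≤ τ^(2-p) |a|^p`. -/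
theorem sum_sq_small_le {ι : Type*} [Fintype ι] (a : ι → ℝ) {p τ M : ℝ} (hp : 0 ≤ p)
    (hp2 : p ≤ 2) (hτ : 0 ≤ τ) (hM : ∑ i, |a i| ^ p ≤ M) :
    ∑ i ∈ Finset.univ.filter (fun i => ¬ (τ ≤ |a i|)), a i ^ 2 ≤ τ ^ (2 - p) * M := by
  have hτ' : 0 ≤ τ ^ (2 - p) := Real.rpow_nonneg hτ _
  calc ∑ i ∈ Finset.univ.filter (fun i => ¬ (τ ≤ |a i|)), a i ^ 2
      ≤ ∑ i ∈ Finset.univ.filter (fun i => ¬ (τ ≤ |a i|)), τ ^ (2 - p) * |a i| ^ p := by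
        refine Finset.sum_le_sum fun i hi => ?_
        have hlt : |a i| ≤ τ := (not_le.mp (Finset.mem_filter.mp hi).2).le
        have hsq : a i ^ 2 = |a i| ^ (2 - p) * |a i| ^ p := by
          rw [← Real.rpow_add_of_nonneg (abs_nonneg _) (by linarith) hp, sub_add_cancel,
            Real.rpow_two, sq_abs]
        rw [hsq]
        gcongr
    _ ≤ ∑ i, τ ^ (2 - p) * |a i| ^ p :=
        Finset.sum_le_sum_of_subset_of_nonneg (Finset.filter_subset _ _)
          fun i _ _ => mul_nonneg hτ' (Real.rpow_nonneg (abs_nonneg _) _)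
    _ ≤ τ ^ (2 - p) * M := by
        rw [← Finset.mul_sum]
        gcongr

/-- **Remark 3.1 (Bohnenblust–Hille truncation).** If `f` has degree at most `d` and its
Fourier coefficients satisfy `(Σ_S |f̂(S)|^{2d/(d+1)})^{(d+1)/(2d)} ≤ B` with `B ≥ 1`, then the
family `S(f) = {S : |f̂(S)| ≥ ε^{(d+1)/2}·B^{-d}}` has at most `B^{2d}/ε^d` members and
`Σ_{S ∉ S(f)} f̂(S)² ≤ ε`. -/
theorem stmt18 (n d : ℕ) (hd1 : 1 ≤ d) (B ε : ℝ) (hB : 1 ≤ B)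
    (hε0 : 0 < ε) (hε1 : ε < 1)
    (f : (Fin n → Bool) → ℝ) (hf : DegLE n d f)
    (hBH : (∑ S : Finset (Fin n),
        |fourierCoeff f S| ^ ((2 * (d : ℝ)) / ((d : ℝ) + 1))) ^ (((d : ℝ) + 1) / (2 * (d : ℝ)))
      ≤ B) :
    ((Finset.univ.filter (fun S : Finset (Fin n) =>
        ε ^ (((d : ℝ) + 1) / 2) * B ^ (-(d : ℝ)) ≤ |fourierCoeff f S|)).card : ℝ)
      ≤ B ^ (2 * d) / ε ^ d ∧
    ∑ S ∈ Finset.univ.filter (fun S : Finset (Fin n) =>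
        ¬ (ε ^ (((d : ℝ) + 1) / 2) * B ^ (-(d : ℝ)) ≤ |fourierCoeff f S|)),
      fourierCoeff f S ^ 2 ≤ ε := by
  have hd : (0 : ℝ) < d := by exact_mod_cast hd1
  have hB0 : 0 < B := by linarith
  set p : ℝ := (2 * (d : ℝ)) / ((d : ℝ) + 1) with hp
  set τ : ℝ := ε ^ (((d : ℝ) + 1) / 2) * B ^ (-(d : ℝ)) with hτ
  have hp0 : 0 < p := by positivity
  have hp2 : p ≤ 2 := by
    rw [hp, div_le_iff₀ (by positivity)]
    linarith
  have hτ0 : 0 < τ := by positivity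
  have hM : ∑ S : Finset (Fin n), |fourierCoeff f S| ^ p ≤ B ^ p := by
    have hinv : ((d : ℝ) + 1) / (2 * (d : ℝ)) = p⁻¹ := by rw [hp, inv_div]
    rw [hinv] at hBH
    exact (Real.rpow_inv_le_iff_of_pos
      (Finset.sum_nonneg fun S _ => Real.rpow_nonneg (abs_nonneg _) _) hB0.le hp0).mp hBH
  have hτpow (q : ℝ) : τ ^ q = ε ^ (((d : ℝ) + 1) / 2 * q) * B ^ (-(d : ℝ) * q) := by
    rw [hτ, Real.mul_rpow (by positivity) (by positivity), ← Real.rpow_mul hε0.le,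
      ← Real.rpow_mul hB0.le]
  have hτp : τ ^ p = ε ^ d * B ^ (-(d : ℝ) * p) := by
    have he : ((d : ℝ) + 1) / 2 * p = d := by
      rw [hp]
      field_simp
    rw [hτpow, he, Real.rpow_natCast]
  have hτ2p : τ ^ (2 - p) * B ^ p = ε := by
    have he : ((d : ℝ) + 1) / 2 * (2 - p) = 1 := by
      rw [hp]
      field_simp
      ring
    have hb : -(d : ℝ) * (2 - p) + p = 0 := by
      rw [hp]
      field_simp
      ring
    rw [hτpow, he, Real.rpow_one, mul_assoc, ← Real.rpow_add hB0, hb, Real.rpow_zero, mul_one]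
  refine ⟨?_, (sum_sq_small_le _ hp0.le hp2 hτ0.le hM).trans_eq hτ2p⟩
  have hBp : B ^ (2 * d) * B ^ (-(d : ℝ) * p) = B ^ p := by
    rw [← Real.rpow_natCast, ← Real.rpow_add hB0]
    congr 1
    rw [hp]
    push_cast
    field_simp
    ring
  have hcard := card_mul_rpow_le _ hp0.le hτ0.le hM
  rw [hτp, ← hBp, ← mul_assoc] at hcard
  rw [le_div_iff₀ (by positivity)]
  exact le_of_mul_le_mul_right hcard (by positivity)
end
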